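/- Let z : ℝ → ℝ² be continuously differentiable on a neighborhood of α ∈ ℝ with z'(α) ≠ 0. Then z(α) ≠ z(α−β) for all sufficiently small β ≠ 0, so BR(α,β) is defined for such β, and lim_{β→0, β≠0} β·BR(α,β) = −(z'(α))^⊥ / ‖z'(α)‖². That is, the coefficient O₋₁(α) of the principal (order β⁻¹) part of the Laurent expansion of the Birkhoff–Rott kernel at β = 0 equals −(z'(α))^⊥/‖z'(α)‖². -/

import Mathlib

/-!
For `β ≠ 0` put `q β = β⁻¹ • (z α - z (α - β))`. As `z` is differentiable at `α`, the difference
quotient `q β` tends to `z' α` when `β → 0`. Since `z' α ≠ 0`, eventually `q β ≠ 0`, so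
`z α ≠ z (α - β)`. The map `v ↦ -v^⊥ / ‖v‖²` is homogeneous of degree `-1`, so `β • BR z α β` is its
value at `q β` (`smul_BR_eq`), and it is continuous away from `0`, which gives the limit.
-/

/- STATEMENT 9: the principal (order β⁻¹) coefficient of the Laurent expansion
of the Birkhoff–Rott kernel BR(α,β) = −(z(α)−z(α−β))^⊥/‖z(α)−z(α−β)‖² at β = 0
is O₋₁(α) = −(z'(α))^⊥/‖z'(α)‖². -/

noncomputable section

/-- The perpendicular a^⊥ = (a₂, −a₁) in the Euclidean plane. -/
def perp (a : EuclideanSpace ℝ (Fin 2)) : EuclideanSpace ℝ (Fin 2) :=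
  (WithLp.equiv 2 (Fin 2 → ℝ)).symm ![a 1, -(a 0)]

/-- The Birkhoff–Rott kernel BR(α,β) = −(z(α)−z(α−β))^⊥ / ‖z(α)−z(α−β)‖². -/
def BR (z : ℝ → EuclideanSpace ℝ (Fin 2)) (α β : ℝ) : EuclideanSpace ℝ (Fin 2) :=
  (-(1 / ‖z α - z (α - β)‖ ^ 2)) • perp (z α - z (α - β))

theorem continuous_perp : Continuous perp := by
  unfold perp
  refine (PiLp.continuous_toLp 2 (fun _ : Fin 2 => ℝ)).comp ?_
  refine continuous_pi fun i => ?_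
  fin_cases i <;> simp <;> fun_prop

theorem perp_smul (c : ℝ) (a : EuclideanSpace ℝ (Fin 2)) : perp (c • a) = c • perp a := by
  ext i
  fin_cases i <;> simp [perp]

/-- Homogeneity of degree `-1`: `β • BR` is the kernel map `v ↦ -v^⊥ / ‖v‖²` evaluated at the
difference quotient. It also holds when `z α = z (α - β)`, both sides then being `0`. -/
theorem smul_BR_eq (z : ℝ → EuclideanSpace ℝ (Fin 2)) (α : ℝ) {β : ℝ} (hβ : β ≠ 0) :
    β • BR z α β = (-(1 / ‖β⁻¹ • (z α - z (α - β))‖ ^ 2)) • perp (β⁻¹ • (z α - z (α - β))) := by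
  rw [BR, perp_smul, smul_smul, smul_smul, norm_smul, mul_pow, Real.norm_eq_abs, sq_abs]
  congr 1
  field_simp

theorem tendsto_backward_quotient {z : ℝ → EuclideanSpace ℝ (Fin 2)} {α : ℝ}
    (hz : DifferentiableAt ℝ z α) :
    Filter.Tendsto (fun β : ℝ => β⁻¹ • (z α - z (α - β))) (nhdsWithin 0 {(0 : ℝ)}ᶜ)
      (nhds (deriv z α)) := by
  -- The backward quotient is the slope at `0` of `β ↦ -z (α - β)`.
  have h : HasDerivAt (fun β : ℝ => -z (α - β)) (deriv z α) 0 := by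
    have h0 : HasDerivAt z (deriv z α) (α - 0) := by simpa using hz.hasDerivAt
    have h1 := (h0.comp_const_sub α 0).neg
    rw [neg_neg] at h1
    exact h1
  refine h.tendsto_slope_zero.congr fun β => ?_
  simp only [zero_add, sub_zero]
  congr 1
  abel

theorem BR_laurent_coefficient_neg_one
    (z : ℝ → EuclideanSpace ℝ (Fin 2)) (α : ℝ)
    (U : Set ℝ) (hU : U ∈ nhds α) (hz : ContDiffOn ℝ 1 z U)
    (hz' : deriv z α ≠ 0) :
    (∀ᶠ β in nhdsWithin 0 {(0 : ℝ)}ᶜ, z α ≠ z (α - β))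
    ∧ Filter.Tendsto (fun β : ℝ => β • BR z α β) (nhdsWithin 0 {(0 : ℝ)}ᶜ)
        (nhds ((-(1 / ‖deriv z α‖ ^ 2)) • perp (deriv z α))) := by
  have hd : DifferentiableAt ℝ z α := (hz.contDiffAt hU).differentiableAt (by norm_num)
  have hq := tendsto_backward_quotient hd
  refine ⟨?_, ?_⟩
  · filter_upwards [hq.eventually_ne hz'] with β hβ heq
    exact hβ (by rw [← heq, sub_self, smul_zero])
  · have hn : ‖deriv z α‖ ^ 2 ≠ 0 := pow_ne_zero 2 (norm_ne_zero_iff.mpr hz')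
    have hlim := ((tendsto_const_nhds (x := (1 : ℝ))).div (hq.norm.pow 2) hn).neg.smul
      ((continuous_perp.tendsto _).comp hq)
    refine hlim.congr' ?_
    filter_upwards [self_mem_nhdsWithin] with β hβ
    exact (smul_BR_eq z α hβ).symm

end
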